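/- Let p_1 < p_2 < p_3 < ... denote the sequence of all prime numbers. Then the limit as N → ∞ of (∑_{i=1}^N φ(p_i − 1)) / (∑_{i=1}^N (p_i − 1)) exists and equals Artin's constant A = ∏_p (1 − 1/(p(p−1))), where the product runs over all primes p. -/

import Mathlib

open Filter

/-- Artin's constant `A = ∏_p (1 - 1/(p(p-1)))`, product over all primes. -/
noncomputable def artinConstant : ℝ :=
  ∏' p : Nat.Primes, (1 - 1 / (((p : ℕ) : ℝ) * (((p : ℕ) : ℝ) - 1)))

section ArtinAux

open MeasureTheory in
noncomputable def kern (x : ℝ) : ℝ := ∫ t in (0:ℝ)..1, (1 - t) * Real.cos (t * x)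

lemma kern_eq (x : ℝ) (hx : x ≠ 0) : kern x = (1 - Real.cos x) / x ^ 2 := by
  unfold kern
  have h : ∀ t ∈ Set.uIcc (0:ℝ) 1, HasDerivAt
      (fun t => (1 - t) * (Real.sin (t * x) / x) - Real.cos (t * x) / x ^ 2)
      ((1 - t) * Real.cos (t * x)) t := by
    intro t _
    have h1 : HasDerivAt (fun t : ℝ => t * x) x t := by
      simpa using (hasDerivAt_id t).mul_const x
    have h2 := h1.sin
    have h3 := h1.cos
    have h4 : HasDerivAt (fun t : ℝ => 1 - t) (-1) t := by
      simpa using (hasDerivAt_id t).const_sub 1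
    have := (h4.mul (h2.div_const x)).sub (h3.div_const (x ^ 2))
    refine this.congr_deriv ?_
    field_simp
    ring
  rw [intervalIntegral.integral_eq_sub_of_hasDerivAt h (Continuous.intervalIntegrable (by fun_prop) _ _)]
  simp
  ring

lemma kern_nonneg (x : ℝ) : 0 ≤ kern x := by
  by_cases hx : x = 0
  · subst hx
    unfold kern
    apply intervalIntegral.integral_nonneg (by norm_num)
    intro t ht
    simp
    exact ht.2
  · rw [kern_eq x hx]
    have := Real.cos_le_one x
    apply div_nonneg <;> [linarith; positivity]

lemma kern_zero : kern 0 = 1/2 := by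
  unfold kern
  simp only [mul_zero, Real.cos_zero, mul_one]
  rw [intervalIntegral.integral_sub (by simp) (by simp)]
  simp
  norm_num

lemma kern_abs_le (x : ℝ) : |kern x| ≤ 1 := by
  unfold kern
  have := intervalIntegral.norm_integral_le_of_norm_le_const (a := 0) (b := 1) (C := 1)
    (f := fun t => (1 - t) * Real.cos (t * x)) (by
      intro t ht
      rw [Set.uIoc_of_le (by norm_num)] at ht
      rw [norm_mul]
      have h1 : ‖1 - t‖ ≤ 1 := by
        rw [Real.norm_eq_abs, abs_le]; constructor <;> linarith [ht.1, ht.2]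
      have h2 : ‖Real.cos (t * x)‖ ≤ 1 := Real.abs_cos_le_one _
      nlinarith [norm_nonneg (1 - t), norm_nonneg (Real.cos (t * x))])
  simpa using this

lemma kern_le (x : ℝ) : kern x ≤ 3 * (1 + x ^ 2)⁻¹ := by
  have h1 := (abs_le.1 (kern_abs_le x)).2
  by_cases hx : x = 0
  · subst hx; simp; linarith
  · rw [← div_eq_mul_inv, le_div_iff₀ (by positivity)]
    have h2 : kern x * x ^ 2 = 1 - Real.cos x := by
      rw [kern_eq x hx]; field_simp
    have := Real.neg_one_le_cos x
    nlinarith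

lemma kern_continuous : Continuous kern := by
  unfold kern
  apply intervalIntegral.continuous_parametric_intervalIntegral_of_continuous'
  fun_prop

lemma kern_integrable : MeasureTheory.Integrable kern := by
  refine (integrable_inv_one_add_sq.const_mul 3).mono' kern_continuous.aestronglyMeasurable ?_
  filter_upwards with x
  rw [Real.norm_of_nonneg (kern_nonneg x)]
  exact kern_le x

lemma kern_integral_pos : 0 < ∫ x, kern x := by
  rw [MeasureTheory.integral_pos_iff_support_of_nonneg kern_nonneg kern_integrable]
  apply IsOpen.measure_pos
  · exact kern_continuous.isOpen_support
  · exact ⟨0, by simp [kern_zero]⟩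

open MeasureTheory Complex Topology

lemma fubini_step (b : ℝ → ℝ) (hbm : Measurable b) (M : ℝ) (hb : ∀ u, |b u| ≤ M) (H : ℂ → ℂ)
    (hH : ∀ s : ℂ, 1 < s.re → H s = ∫ u in Set.Ioi (0:ℝ), (b u : ℂ) * cexp (-(s - 1) * u))
    (l v δ : ℝ) (hδ : 0 < δ) :
    (∫ t in (0:ℝ)..1, ((1 - t : ℝ) : ℂ) * cexp (I * (l * t * v)) * H (1 + δ + I * (l * t))).re =
      ∫ u in Set.Ioi (0:ℝ), b u * Real.exp (-δ * u) * kern (l * (u - v)) := by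
  have h1 : ∀ t : ℝ, ((1 - t : ℝ) : ℂ) * cexp (I * (l * t * v)) * H (1 + δ + I * (l * t)) =
      ∫ u in Set.Ioi (0:ℝ), ((1 - t : ℝ) : ℂ) * (b u : ℂ) * cexp (-δ * u) *
        cexp (-I * (l * t * (u - v))) := by
    intro t
    rw [hH _ (by simp [hδ]), ← MeasureTheory.integral_const_mul]
    congr 1
    ext u
    have : cexp (-(1 + δ + I * (l * t) - 1) * u) * cexp (I * (l * t * v)) =
      cexp (-δ * u) * cexp (-I * (l * t * (u - v))) := by
      rw [← Complex.exp_add, ← Complex.exp_add]; congr 1; ring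
    linear_combination ((1 - t : ℝ) : ℂ) * (b u : ℂ) * this
  simp_rw [h1]
  have hexp : Integrable (fun u => Real.exp (-δ * u)) (volume.restrict (Set.Ioi (0:ℝ))) :=
    integrableOn_exp_mul_Ioi (by linarith) 0
  have hint : Integrable (Function.uncurry fun (t u : ℝ) => ((1 - t : ℝ) : ℂ) * (b u : ℂ) *
      cexp (-δ * u) * cexp (-I * (l * t * (u - v))))
      ((volume.restrict (Set.Ioc 0 1)).prod (volume.restrict (Set.Ioi (0:ℝ)))) := by
    have h3 : Integrable (fun t : ℝ => (1:ℝ)) (volume.restrict (Set.Ioc (0:ℝ) 1)) := by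
      simp
    have h2 := (h3.mul_prod (hexp.const_mul M))
    refine h2.mono' (Measurable.aestronglyMeasurable (by fun_prop)) ?_
    have : ∀ᵐ (z : ℝ × ℝ) ∂((volume.restrict (Set.Ioc (0:ℝ) 1)).prod (volume.restrict (Set.Ioi (0:ℝ)))), z.1 ∈ Set.Ioc (0:ℝ) 1 := by
      rw [Measure.prod_restrict]
      filter_upwards [ae_restrict_mem (measurableSet_Ioc.prod measurableSet_Ioi)] with z hz
      exact hz.1
    filter_upwards [this] with z hz
    simp only [Function.uncurry]
    have e1 : ‖cexp (-I * (l * z.1 * (z.2 - v)))‖ = 1 := by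
      rw [Complex.norm_exp]; simp
    have e2 : ‖cexp (-δ * z.2)‖ = Real.exp (-δ * z.2) := by
      rw [Complex.norm_exp]; simp
    rw [norm_mul, norm_mul, norm_mul, e1, e2, Complex.norm_real, Complex.norm_real, mul_one, one_mul]
    have h1 : ‖1 - z.1‖ ≤ 1 := by
        rw [Real.norm_eq_abs, abs_le]; constructor <;> linarith [hz.1, hz.2]
    have := hb z.2
    rw [← Real.norm_eq_abs] at this
    apply mul_le_mul_of_nonneg_right _ (Real.exp_pos _).le
    nlinarith [norm_nonneg (1 - z.1), norm_nonneg (b z.2)]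
  rw [intervalIntegral.integral_of_le (by norm_num), MeasureTheory.integral_integral_swap hint]
  have hint2 := hint.integral_prod_right
  simp only [Function.uncurry] at hint2
  rw [show (∀ z : ℂ, z.re = reCLM z) from fun _ => rfl, ← ContinuousLinearMap.integral_comp_comm _ hint2]
  congr 1
  ext u
  rw [← intervalIntegral.integral_of_le (by norm_num)]
  rw [← ContinuousLinearMap.intervalIntegral_comp_comm]
  · unfold kern
    rw [← intervalIntegral.integral_const_mul]
    congr 1
    ext t
    have : cexp (-δ * u) = ((Real.exp (-δ * u) : ℝ) : ℂ) := by push_cast; rfl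
    rw [this, ← ofReal_mul, ← ofReal_mul]
    rw [reCLM_apply, re_ofReal_mul, Complex.exp_re]
    have a1 : (-I * (l * t * (u - v))).re = 0 := by simp
    have a2 : (-I * (l * t * (u - v))).im = -(t * (l * (u - v))) := by simp; ring
    rw [a1, a2, Real.cos_neg]
    simp
    ring
  · apply Continuous.intervalIntegrable
    fun_prop

lemma limit_step (b : ℝ → ℝ) (hbm : Measurable b) (M : ℝ) (hb : ∀ u, |b u| ≤ M) (H : ℂ → ℂ)
    (hHc : ContinuousOn H {s | 1 ≤ s.re})
    (hH : ∀ s : ℂ, 1 < s.re → H s = ∫ u in Set.Ioi (0:ℝ), (b u : ℂ) * cexp (-(s - 1) * u))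
    (l v : ℝ) (hl : 0 < l) :
    (∫ t in (0:ℝ)..1, ((1 - t : ℝ) : ℂ) * cexp (I * (l * t * v)) * H (1 + I * (l * t))).re =
      ∫ u in Set.Ioi (0:ℝ), b u * kern (l * (u - v)) := by
  -- compact bound
  have hcpt : IsCompact ((fun z : ℝ × ℝ => (1 + z.1 + I * (l * z.2) : ℂ)) '' (Set.Icc 0 1 ×ˢ Set.Icc 0 1)) := by
    apply (isCompact_Icc.prod isCompact_Icc).image
    fun_prop
  obtain ⟨C, hC⟩ := hcpt.exists_bound_of_continuousOn (hHc.mono (by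
    rintro _ ⟨z, hz, rfl⟩
    simp
    exact hz.1.1))
  have hev : ∀ᶠ δ : ℝ in 𝓝[>] 0, δ ∈ Set.Ioo (0:ℝ) 1 := Ioo_mem_nhdsGT (by norm_num)
  have hHcont : ∀ δ : ℝ, 0 ≤ δ → Continuous (fun t : ℝ => H (1 + δ + I * (l * t))) := by
    intro δ hδ
    apply hHc.comp_continuous (by fun_prop)
    intro t
    simp [hδ]
  have T1 : Tendsto (fun δ : ℝ => ∫ t in (0:ℝ)..1, ((1 - t : ℝ) : ℂ) * cexp (I * (l * t * v)) * H (1 + δ + I * (l * t)))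
      (𝓝[>] 0) (𝓝 (∫ t in (0:ℝ)..1, ((1 - t : ℝ) : ℂ) * cexp (I * (l * t * v)) * H (1 + I * (l * t)))) := by
    apply intervalIntegral.tendsto_integral_filter_of_dominated_convergence (fun _ => C)
    · filter_upwards [hev] with δ hδ
      apply Continuous.aestronglyMeasurable
      exact Continuous.mul (by fun_prop) (hHcont δ hδ.1.le)
    · filter_upwards [hev] with δ hδ
      filter_upwards with t ht
      rw [Set.uIoc_of_le (by norm_num)] at ht
      have := hC (1 + δ + I * (l * t)) ⟨(δ, t), ⟨⟨hδ.1.le, hδ.2.le⟩, ht.1.le, ht.2⟩, rfl⟩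
      rw [norm_mul, norm_mul]
      have e1 : ‖cexp (I * (l * t * v))‖ = 1 := by
        rw [Complex.norm_exp]; simp
      have h1 : ‖((1 - t : ℝ) : ℂ)‖ ≤ 1 := by
        rw [Complex.norm_real, Real.norm_eq_abs, abs_le]; constructor <;> linarith [ht.1, ht.2]
      rw [e1, mul_one]
      nlinarith [norm_nonneg ((1 - t : ℝ) : ℂ), norm_nonneg (H (1 + δ + I * (l * t)))]
    · simp
    · filter_upwards with t ht
      apply Tendsto.const_mul
      have h0 := hHc (1 + I * (l * t)) (by simp)
      apply h0.tendsto.comp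
      apply tendsto_nhdsWithin_of_tendsto_nhds_of_eventually_within
      · have : Continuous (fun δ : ℝ => (1 + δ + I * (l * t) : ℂ)) := by fun_prop
        have := this.tendsto 0
        simp at this
        exact this.mono_left nhdsWithin_le_nhds
      · filter_upwards [hev] with δ hδ
        simp [hδ.1.le]
  have T2 : Tendsto (fun δ : ℝ => ∫ u in Set.Ioi (0:ℝ), b u * Real.exp (-δ * u) * kern (l * (u - v)))
      (𝓝[>] 0) (𝓝 (∫ u in Set.Ioi (0:ℝ), b u * kern (l * (u - v)))) := by
    apply tendsto_integral_filter_of_dominated_convergence (fun u => M * kern (l * (u - v)))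
    · filter_upwards with δ
      apply Measurable.aestronglyMeasurable
      have := kern_continuous.measurable
      fun_prop
    · filter_upwards [hev] with δ hδ
      filter_upwards [ae_restrict_mem measurableSet_Ioi] with u hu
      rw [norm_mul, norm_mul, Real.norm_of_nonneg (kern_nonneg _)]
      apply mul_le_mul_of_nonneg_right _ (kern_nonneg _)
      have := hb u
      have h2 : ‖Real.exp (-δ * u)‖ ≤ 1 := by
        rw [Real.norm_of_nonneg (Real.exp_pos _).le, Real.exp_le_one_iff]
        have : 0 < δ * u := mul_pos hδ.1 hu
        linarith
      rw [← Real.norm_eq_abs] at this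
      nlinarith [norm_nonneg (b u)]
    · apply Integrable.integrableOn
      apply Integrable.const_mul
      exact (kern_integrable.comp_mul_left' hl.ne').comp_sub_right v
    · filter_upwards with u
      have : Continuous (fun δ : ℝ => b u * Real.exp (-δ * u) * kern (l * (u - v))) := by fun_prop
      have := this.tendsto 0
      simp at this
      simpa using this.mono_left nhdsWithin_le_nhds
  refine tendsto_nhds_unique ((continuous_re.tendsto _).comp T1) (T2.congr' ?_)
  filter_upwards [hev] with δ hδ
  exact (fubini_step b hbm M hb H hH l v δ hδ.1).symm

lemma conv_tendsto (b : ℝ → ℝ) (hbm : Measurable b) (M : ℝ) (hb : ∀ u, |b u| ≤ M) (H : ℂ → ℂ)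
    (hHc : ContinuousOn H {s | 1 ≤ s.re})
    (hH : ∀ s : ℂ, 1 < s.re → H s = ∫ u in Set.Ioi (0:ℝ), (b u : ℂ) * cexp (-(s - 1) * u))
    (l : ℝ) (hl : 0 < l) :
    Tendsto (fun v => ∫ u in Set.Ioi (0:ℝ), b u * kern (l * (u - v))) atTop (𝓝 0) := by
  have := Real.tendsto_integral_exp_smul_cocompact
    ((Set.Ioc (0:ℝ) 1).indicator (fun t : ℝ => ((1 - t : ℝ) : ℂ) * H (1 + I * (l * t))))
  have h2 : Tendsto (fun v : ℝ => v * (- l / (2 * Real.pi))) atTop (cocompact ℝ) := by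
    refine Tendsto.mono_right ?_ atBot_le_cocompact
    apply Tendsto.atTop_mul_const_of_neg _ tendsto_id
    have := Real.pi_pos
    rw [neg_div]
    have : 0 < l / (2 * Real.pi) := by positivity
    linarith
  have h3 := (continuous_re.tendsto _).comp (this.comp h2)
  simp only [zero_re] at h3
  refine h3.congr fun v => ?_
  rw [← limit_step b hbm M hb H hHc hH l v hl]
  simp only [Function.comp]
  rw [intervalIntegral.integral_of_le (by norm_num), ← integral_indicator measurableSet_Ioc]
  congr 2
  ext t
  by_cases ht : t ∈ Set.Ioc (0:ℝ) 1
  · rw [Set.indicator_of_mem ht, Set.indicator_of_mem ht, Circle.smul_def, Real.fourierChar_apply,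
      smul_eq_mul]
    have : cexp (((2 * Real.pi * -(t * (v * (-l / (2 * Real.pi)))) : ℝ) : ℂ) * I) = cexp (I * (l * t * v)) := by
      congr 1
      have : (2 * Real.pi * -(t * (v * (-l / (2 * Real.pi))))) = l * t * v := by
        field_simp
      rw [this]; push_cast; ring
    rw [this]; ring
  · rw [Set.indicator_of_notMem ht, Set.indicator_of_notMem ht]; simp

lemma no_window (b : ℝ → ℝ) (hbm : Measurable b) (M : ℝ) (hb : ∀ u, |b u| ≤ M)
    (hconv : ∀ l : ℝ, 0 < l → Tendsto (fun v => ∫ u in Set.Ioi (0:ℝ), b u * kern (l * (u - v))) atTop (𝓝 0))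
    (η ε : ℝ) (hη : 0 < η) (hε : 0 < ε) :
    ∀ᶠ v in atTop, ¬ ∀ u ∈ Set.Icc (v - η) (v + η), ε ≤ b u := by
  set J := ∫ x, kern x with hJ
  have hJpos : 0 < J := kern_integral_pos
  have hM : 0 ≤ M := (abs_nonneg _).trans (hb 0)
  have hk : Tendsto (fun l : ℝ => ∫ x in (-(l * η))..(l * η), kern x) atTop (𝓝 J) := by
    have h1 : Tendsto (fun l : ℝ => l * η) atTop atTop := tendsto_id.atTop_mul_const hη
    exact intervalIntegral_tendsto_integral kern_integrable (tendsto_neg_atTop_atBot.comp h1) h1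
  have hk2 : Tendsto (fun l : ℝ => (ε + M) * (∫ x in (-(l * η))..(l * η), kern x) - M * J) atTop
      (𝓝 ((ε + M) * J - M * J)) := (hk.const_mul _).sub_const _
  have hpos : 0 < (ε + M) * J - M * J := by nlinarith
  obtain ⟨l, hl0, hl⟩ := ((eventually_gt_atTop (0:ℝ)).and (hk2.eventually_const_lt hpos)).exists
  set D := (ε + M) * (∫ x in (-(l * η))..(l * η), kern x) - M * J with hD
  have hev := (hconv l hl0).eventually_lt_const (u := l⁻¹ * D) (by positivity)
  filter_upwards [hev, eventually_ge_atTop η, eventually_gt_atTop η] with v hv hvη hvη' hall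
  refine absurd hv (not_lt.2 ?_)
  have hKint : Integrable (fun u => kern (l * (u - v))) :=
    (kern_integrable.comp_mul_left' hl0.ne').comp_sub_right v
  have hJ' : ∫ u, kern (l * (u - v)) = l⁻¹ * J := by
    rw [integral_sub_right_eq_self (fun u => kern (l * u)) v, Measure.integral_comp_mul_left]
    rw [abs_of_pos (by positivity), smul_eq_mul]
  have hκ : ∫ u in (v - η)..(v + η), kern (l * (u - v)) = l⁻¹ * ∫ x in (-(l * η))..(l * η), kern x := by
    rw [intervalIntegral.integral_comp_sub_right (fun u => kern (l * u)) v,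
      intervalIntegral.integral_comp_mul_left _ hl0.ne']
    simp
  have hbK : Integrable (fun u => b u * kern (l * (u - v))) := by
    refine (hKint.const_mul M).mono' ?_ ?_
    · have := kern_continuous.measurable
      exact Measurable.aestronglyMeasurable (by fun_prop)
    · filter_upwards with u
      rw [norm_mul, Real.norm_of_nonneg (kern_nonneg _)]
      exact mul_le_mul_of_nonneg_right (hb u) (kern_nonneg _)
  have hind : Integrable ((Set.Ioc (v - η) (v + η)).indicator (fun u => (ε + M) * kern (l * (u - v)))) :=
    (hKint.const_mul _).indicator measurableSet_Ioc
  have key : ∫ u in Set.Ioi (0:ℝ), ((Set.Ioc (v - η) (v + η)).indicator (fun u => (ε + M) * kern (l * (u - v))) u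
      - M * kern (l * (u - v))) ≤ ∫ u in Set.Ioi (0:ℝ), b u * kern (l * (u - v)) := by
    apply integral_mono
    · exact hind.integrableOn.sub (hKint.const_mul M).integrableOn
    · exact hbK.integrableOn
    · intro u
      have hk0 := kern_nonneg (l * (u - v))
      by_cases hu : u ∈ Set.Ioc (v - η) (v + η)
      · simp only [Set.indicator_of_mem hu]
        have := hall u ⟨hu.1.le, hu.2⟩
        nlinarith
      · simp only [Set.indicator_of_notMem hu]
        have := (abs_le.1 (hb u)).1
        nlinarith
  refine le_trans ?_ key
  rw [integral_sub hind.integrableOn (hKint.const_mul M).integrableOn, setIntegral_indicator measurableSet_Ioc]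
  have hsub : Set.Ioi (0:ℝ) ∩ Set.Ioc (v - η) (v + η) = Set.Ioc (v - η) (v + η) := by
    apply Set.inter_eq_right.2
    intro u hu
    have := hu.1
    simp only [Set.mem_Ioi]; linarith
  rw [hsub, ← intervalIntegral.integral_of_le (by linarith), intervalIntegral.integral_const_mul, hκ,
    MeasureTheory.integral_const_mul]
  have : ∫ u in Set.Ioi (0:ℝ), kern (l * (u - v)) ≤ l⁻¹ * J := by
    rw [← hJ']
    exact setIntegral_le_integral hKint (by filter_upwards with u using kern_nonneg _)
  have := mul_le_mul_of_nonneg_left this hM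
  rw [hD]
  linarith

lemma tauber (a : ℝ → ℝ) (c : ℝ) (ham : Measurable a) (M : ℝ) (hb : ∀ u, |a u - c| ≤ M)
    (hmono : ∀ u v, u ≤ v → a u * Real.exp u ≤ a v * Real.exp v) (ha0 : ∀ u, 0 ≤ a u)
    (hconv : ∀ l : ℝ, 0 < l →
      Tendsto (fun v => ∫ u in Set.Ioi (0:ℝ), (a u - c) * kern (l * (u - v))) atTop (𝓝 0)) :
    Tendsto a atTop (𝓝 c) := by
  have hconv' : ∀ l : ℝ, 0 < l →
      Tendsto (fun v => ∫ u in Set.Ioi (0:ℝ), (c - a u) * kern (l * (u - v))) atTop (𝓝 0) := by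
    intro l hl
    have := (hconv l hl).neg
    rw [neg_zero] at this
    refine this.congr fun v => ?_
    rw [← integral_neg]
    congr 1; ext u; ring
  have hb' : ∀ u, |c - a u| ≤ M := fun u => by rw [abs_sub_comm]; exact hb u
  rw [tendsto_order]
  constructor
  · intro x hx
    have hlim : Tendsto (fun η : ℝ => c - x * Real.exp (2 * η)) (𝓝[>] 0) (𝓝 (c - x)) := by
      have : Continuous (fun η : ℝ => c - x * Real.exp (2 * η)) := by fun_prop
      have := this.tendsto 0
      simp at this
      exact this.mono_left nhdsWithin_le_nhds
    obtain ⟨η, hη, hη0⟩ := ((hlim.eventually_const_lt (u := (c - x) / 2) (by linarith)).and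
      self_mem_nhdsWithin).exists
    have h := no_window (fun u => c - a u) (by fun_prop) M hb' hconv' η ((c - x) / 2) hη0 (by linarith)
    have h2 := (tendsto_atTop_add_const_right atTop (-η) tendsto_id).eventually h
    filter_upwards [h2] with v hv
    by_contra hcon
    push Not at hcon
    apply hv
    intro u hu
    simp only [id] at hu
    have h3 := hmono u v (by linarith [hu.2])
    have h4 : a u ≤ a v * Real.exp (v - u) := by
      rw [Real.exp_sub, ← mul_div_assoc, le_div_iff₀ (Real.exp_pos _)]; exact h3
    have h5 : a v * Real.exp (v - u) ≤ x * Real.exp (2 * η) := by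
      apply mul_le_mul hcon _ (Real.exp_pos _).le ((ha0 v).trans hcon)
      apply Real.exp_le_exp.2; linarith [hu.1]
    linarith
  · intro x hx
    have hlim : Tendsto (fun η : ℝ => x * Real.exp (-(2 * η)) - c) (𝓝[>] 0) (𝓝 (x - c)) := by
      have : Continuous (fun η : ℝ => x * Real.exp (-(2 * η)) - c) := by fun_prop
      have := this.tendsto 0
      simp at this
      exact this.mono_left nhdsWithin_le_nhds
    obtain ⟨η, hη, hη0⟩ := ((hlim.eventually_const_lt (u := (x - c) / 2) (by linarith)).and
      self_mem_nhdsWithin).exists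
    have h := no_window (fun u => a u - c) (by fun_prop) M hb hconv η ((x - c) / 2) hη0 (by linarith)
    have h2 := (tendsto_atTop_add_const_right atTop η tendsto_id).eventually h
    filter_upwards [h2] with v hv
    by_contra hcon
    push Not at hcon
    apply hv
    intro u hu
    simp only [id] at hu
    have h3 := hmono v u (by linarith [hu.1])
    have h4 : a v * Real.exp (v - u) ≤ a u := by
      rw [Real.exp_sub, ← mul_div_assoc, div_le_iff₀ (Real.exp_pos _)]; exact h3
    have h5 : x * Real.exp (-(2 * η)) ≤ a v * Real.exp (v - u) := by
      apply mul_le_mul hcon _ (Real.exp_pos _).le (ha0 v)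
      apply Real.exp_le_exp.2; linarith [hu.2]
    linarith

theorem wiener_ikehara (f : ℕ → ℝ) (hf : ∀ n, 0 ≤ f n) (C c : ℝ)
    (hS : ∀ x : ℝ, 0 ≤ x → ∑ k ∈ Finset.Icc 1 ⌊x⌋₊, f k ≤ C * x) (G : ℂ → ℂ)
    (hG : ContinuousOn G {s | 1 ≤ s.re})
    (hGe : ∀ s : ℂ, 1 < s.re → G s = LSeries (fun n => (f n : ℂ)) s - c / (s - 1)) :
    Tendsto (fun x : ℝ => (∑ k ∈ Finset.Icc 1 ⌊x⌋₊, f k) / x) atTop (𝓝 c) := by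
  set S : ℝ → ℝ := fun x => ∑ k ∈ Finset.Icc 1 ⌊x⌋₊, f k with hSdef
  have hSmono : Monotone S := by
    intro x y hxy
    apply Finset.sum_le_sum_of_subset_of_nonneg
    · exact Finset.Icc_subset_Icc_right (Nat.floor_le_floor hxy)
    · intros; exact hf _
  have hS0 : ∀ x, 0 ≤ S x := fun x => Finset.sum_nonneg fun _ _ => hf _
  set a : ℝ → ℝ := fun u => S (Real.exp u) * Real.exp (-u) with ha
  have ham : Measurable a := by
    have := hSmono.measurable
    fun_prop
  have ha0 : ∀ u, 0 ≤ a u := fun u => mul_nonneg (hS0 _) (Real.exp_pos _).le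
  have haC : ∀ u, a u ≤ C := by
    intro u
    have := hS (Real.exp u) (Real.exp_pos _).le
    have h2 := mul_le_mul_of_nonneg_right this (Real.exp_pos (-u)).le
    rw [mul_assoc, ← Real.exp_add] at h2
    simpa using h2
  have hb : ∀ u, |a u - c| ≤ C + |c| := by
    intro u
    refine (abs_sub _ _).trans ?_
    rw [abs_of_nonneg (ha0 u)]
    linarith [haC u]
  have haexp : ∀ u, a u * Real.exp u = S (Real.exp u) := by
    intro u
    simp only [ha]
    rw [mul_assoc, ← Real.exp_add]; simp
  have hL : ∀ s : ℂ, 1 < s.re → (G s - c) / s =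
      ∫ u in Set.Ioi (0:ℝ), ((a u - c : ℝ) : ℂ) * cexp (-(s - 1) * u) := by
    intro s hs
    have hs0 : s ≠ 0 := by rintro rfl; simp at hs; linarith
    have hs1 : s - 1 ≠ 0 := by
      intro h
      have : s = 1 := by linear_combination h
      rw [this] at hs; simp at hs
    have h1 := LSeries_eq_mul_integral_of_nonneg f (r := 1) (by norm_num) (s := s) hs (by
      apply Asymptotics.IsBigO.of_bound C
      filter_upwards with n
      have := hS n (by positivity)
      rw [Nat.floor_natCast] at this
      rw [Real.norm_of_nonneg (Finset.sum_nonneg fun _ _ => hf _), Real.rpow_one, Real.norm_of_nonneg (by positivity)]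
      exact this) hf
    have h2 := integral_image_eq_integral_abs_deriv_smul (s := Set.Ioi (0:ℝ)) (f := Real.exp) (f' := Real.exp) measurableSet_Ioi
      (fun x _ => (Real.hasDerivAt_exp x).hasDerivWithinAt) (Real.exp_injective.injOn)
      (fun t => (∑ k ∈ Finset.Icc 1 ⌊t⌋₊, (f k : ℂ)) * (t:ℂ) ^ (-(s + 1)))
    have himg : Real.exp '' Set.Ioi 0 = Set.Ioi 1 := by
      ext y
      constructor
      · rintro ⟨x, hx, rfl⟩
        exact Real.one_lt_exp_iff.2 hx
      · intro hy
        have hy' : (1:ℝ) < y := hy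
        exact ⟨Real.log y, Real.log_pos hy', Real.exp_log (by linarith)⟩
    rw [himg] at h2
    have h3 : ∀ u : ℝ, |Real.exp u| • ((∑ k ∈ Finset.Icc 1 ⌊Real.exp u⌋₊, (f k : ℂ)) * ((Real.exp u : ℝ):ℂ) ^ (-(s + 1)))
       = (a u : ℂ) * cexp (-(s-1) * u) := by
      intro u
      rw [abs_of_pos (Real.exp_pos u), Complex.cpow_def_of_ne_zero (by exact_mod_cast (Real.exp_pos u).ne'),
        ← Complex.ofReal_log (Real.exp_pos u).le, Real.log_exp]
      simp only [ha, hSdef]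
      push_cast
      rw [Complex.real_smul]
      push_cast
      have : cexp u * cexp (u * (-(s+1))) = cexp (-u) * cexp (-(s-1)*u) := by
        rw [← Complex.exp_add, ← Complex.exp_add]; congr 1; ring
      linear_combination (∑ k ∈ Finset.Icc 1 ⌊Real.exp u⌋₊, (f k : ℂ)) * this
    simp_rw [h3] at h2
    rw [h2] at h1
    have hexp : Integrable (fun u : ℝ => cexp (-(s - 1) * u)) (volume.restrict (Set.Ioi (0:ℝ))) :=
      integrableOn_exp_mul_complex_Ioi (by simp; linarith) 0
    have h4 : ∫ u in Set.Ioi (0:ℝ), cexp (-(s - 1) * u) = 1 / (s - 1) := by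
      rw [integral_exp_mul_complex_Ioi (by simp; linarith)]
      simp
      rw [← neg_sub s 1, neg_div_neg_eq, one_div]
    have haint : Integrable (fun u : ℝ => (a u : ℂ) * cexp (-(s - 1) * u)) (volume.restrict (Set.Ioi (0:ℝ))) := by
      apply hexp.bdd_mul (c := C)
      · exact Measurable.aestronglyMeasurable (by fun_prop)
      · filter_upwards with u
        rw [Complex.norm_real, Real.norm_of_nonneg (ha0 u)]
        exact haC u
    have h5 : ∫ u in Set.Ioi (0:ℝ), ((a u - c : ℝ) : ℂ) * cexp (-(s - 1) * u) =
       (∫ u in Set.Ioi (0:ℝ), (a u : ℂ) * cexp (-(s - 1) * u)) - c * (1 / (s - 1)) := by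
      rw [← h4, ← MeasureTheory.integral_const_mul, ← integral_sub haint (hexp.const_mul _)]
      congr 1; ext u; push_cast; ring
    rw [h5, hGe s hs, h1]
    field_simp
    ring
  have htends := tauber a c ham (C + |c|) hb (by
    intro u v huv
    rw [haexp, haexp]
    exact hSmono (Real.exp_le_exp.2 huv)) ha0 (by
    intro l hl
    apply conv_tendsto (fun u => a u - c) (by fun_prop) (C + |c|) hb (fun s => (G s - c) / s) _ hL l hl
    apply ContinuousOn.div (by fun_prop) (by fun_prop)
    rintro s hs rfl
    simp at hs
    linarith)
  refine (htends.comp Real.tendsto_log_atTop).congr' ?_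
  filter_upwards [eventually_gt_atTop 0] with x hx
  simp only [Function.comp, ha]
  rw [Real.exp_log hx, Real.exp_neg, Real.exp_log hx]
  rfl

/-- primes up to `N` congruent to 1 mod `d`, weighted by log -/
noncomputable def th (d N : ℕ) : ℝ := ∑ p ∈ (Finset.Icc 1 N).filter (fun p => p.Prime ∧ d ∣ p - 1), Real.log p

lemma cong_iff (d n : ℕ) (hn : 1 ≤ n) : ((n : ZMod d) = 1) ↔ d ∣ n - 1 := by
  rw [← ZMod.natCast_eq_zero_iff, Nat.cast_sub hn, sub_eq_zero]; simp

open ArithmeticFunction.vonMangoldt in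
lemma psi_ap (d : ℕ) (hd : d ≠ 0) :
    Tendsto (fun x : ℝ => (∑ k ∈ Finset.Icc 1 ⌊x⌋₊, residueClass (1 : ZMod d) k) / x) atTop
      (𝓝 (d.totient : ℝ)⁻¹) := by
  have : NeZero d := ⟨hd⟩
  apply wiener_ikehara _ (residueClass_nonneg _) (Real.log 4 + 4) _ _ (LFunctionResidueClassAux (1 : ZMod d))
    (continuousOn_LFunctionResidueClassAux _)
  · intro s hs
    rw [eqOn_LFunctionResidueClassAux isUnit_one hs]
    push_cast
    rfl
  · intro x hx
    refine le_trans ?_ (Chebyshev.psi_le_const_mul_self hx)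
    exact Finset.sum_le_sum fun n _ => residueClass_le _ n

open ArithmeticFunction.vonMangoldt in
lemma th_tendsto (d : ℕ) (hd : d ≠ 0) :
    Tendsto (fun N : ℕ => th d N / N) atTop (𝓝 (d.totient : ℝ)⁻¹) := by
  have h1 := (psi_ap d hd).comp (tendsto_natCast_atTop_atTop (R := ℝ))
  obtain ⟨C, hC⟩ := Chebyshev.psi_sub_theta_le_mul_sqrt
  have hdiff : ∀ N : ℕ, 0 ≤ (∑ k ∈ Finset.Icc 1 N, residueClass (1 : ZMod d) k) - th d N ∧
      (∑ k ∈ Finset.Icc 1 N, residueClass (1 : ZMod d) k) - th d N ≤ C * Real.sqrt N := by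
    intro N
    have heq : (∑ k ∈ Finset.Icc 1 N, residueClass (1 : ZMod d) k) - th d N =
        ∑ k ∈ (Finset.Icc 1 N).filter (fun p => ¬ p.Prime), residueClass (1 : ZMod d) k := by
      rw [← Finset.sum_filter_add_sum_filter_not (Finset.Icc 1 N) (fun p => p.Prime)]
      have : th d N = ∑ k ∈ (Finset.Icc 1 N).filter (fun p => p.Prime), residueClass (1 : ZMod d) k := by
        unfold th
        rw [← Finset.filter_filter, Finset.sum_filter (fun p => d ∣ p - 1)]
        apply Finset.sum_congr rfl
        intro p hp
        simp only [Finset.mem_filter, Finset.mem_Icc] at hp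
        unfold residueClass
        rw [Set.indicator_apply]
        simp only [Set.mem_ofPred_eq, cong_iff d p hp.1.1, ArithmeticFunction.vonMangoldt_apply_prime hp.2]
      rw [this]; ring
    rw [heq]
    refine ⟨Finset.sum_nonneg fun _ _ => residueClass_nonneg _ _, ?_⟩
    refine le_trans ?_ (hC N)
    rw [Chebyshev.psi_sub_theta_eq_sum_not_prime, Nat.floor_natCast]
    exact Finset.sum_le_sum fun n _ => residueClass_le _ n
  have h2 : Tendsto (fun N : ℕ => ((∑ k ∈ Finset.Icc 1 N, residueClass (1 : ZMod d) k) - th d N) / N) atTop (𝓝 0) := by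
    have h3 : Tendsto (fun N : ℕ => C * (Real.sqrt N)⁻¹) atTop (𝓝 0) := by
      have : Tendsto (fun N : ℕ => (Real.sqrt N)⁻¹) atTop (𝓝 0) :=
        (Real.tendsto_sqrt_atTop.comp tendsto_natCast_atTop_atTop).inv_tendsto_atTop
      simpa using this.const_mul C
    refine squeeze_zero' ?_ ?_ h3
    · filter_upwards with N
      exact div_nonneg (hdiff N).1 (by positivity)
    · filter_upwards [eventually_gt_atTop 0] with N hN
      have hN' : (0:ℝ) < N := by exact_mod_cast hN
      rw [div_le_iff₀ hN']
      refine (hdiff N).2.trans (le_of_eq ?_)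
      have := Real.sqrt_pos.2 hN'
      have h4 := Real.mul_self_sqrt hN'.le
      field_simp
      rw [pow_two, h4]
  have h3 := h1.sub h2
  rw [sub_zero] at h3
  refine h3.congr fun N => ?_
  simp only [Function.comp, Nat.floor_natCast]
  ring

lemma fact_dvd (d n : ℕ) (hd : d ≠ 0) : n.factorial ∣ d ^ n * ∏ k ∈ Finset.Icc 1 n, (d * k + 1) := by
  have hX : d ^ n * ∏ k ∈ Finset.Icc 1 n, (d * k + 1) ≠ 0 := by
    apply mul_ne_zero (pow_ne_zero _ hd)
    exact Finset.prod_ne_zero_iff.2 fun k _ => by omega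
  rw [← Nat.factorization_prime_le_iff_dvd (Nat.factorial_ne_zero n) hX]
  intro q hq
  rw [← hq.pow_dvd_iff_le_factorization hX]
  set e := n.factorial.factorization q with he
  have hqe : q ^ e ∣ n.factorial := Nat.ordProj_dvd _ _
  by_cases hqd : q ∣ d
  · apply Dvd.dvd.mul_right
    have : e ≤ n := by
      have := Fact.mk hq
      have h1 := sub_one_mul_padicValNat_factorial (p := q) n
      rw [he, Nat.factorization_def _ hq]
      have h2 : 1 ≤ q - 1 := by have := hq.two_le; omega
      have h3 : 1 * padicValNat q n.factorial ≤ (q - 1) * padicValNat q n.factorial :=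
        Nat.mul_le_mul_right _ h2
      omega
    exact (pow_dvd_pow q this).trans (pow_dvd_pow_of_dvd hqd n)
  · apply Dvd.dvd.mul_left
    have hcop : Nat.Coprime d (q ^ e) := by
      apply Nat.Coprime.pow_right
      exact ((Nat.Prime.coprime_iff_not_dvd hq).2 hqd).symm
    rw [← ZMod.natCast_eq_zero_iff]
    set u : ℕ := ((d : ZMod (q ^ e))⁻¹).val with hu
    have : NeZero (q ^ e) := ⟨pow_ne_zero _ hq.ne_zero⟩
    have hdu : (d : ZMod (q ^ e)) * (u : ZMod (q ^ e)) = 1 := by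
      rw [hu, ZMod.natCast_zmod_val]
      exact ZMod.coe_mul_inv_eq_one d hcop
    have h1 : ∀ j : ℕ, ((∏ k ∈ Finset.Icc 1 j, (d * k + 1) : ℕ) : ZMod (q ^ e)) =
        (d : ZMod (q ^ e)) ^ j * (((u + 1).ascFactorial j : ℕ) : ZMod (q ^ e)) := by
      intro j
      induction j with
      | zero => simp
      | succ j ih =>
        rw [Finset.prod_Icc_succ_top (by omega), Nat.cast_mul, ih, Nat.ascFactorial_succ]
        push_cast
        linear_combination (-(d : ZMod (q ^ e)) ^ j * ((u + 1).ascFactorial j : ZMod (q ^ e))) * hdu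
    rw [h1]
    have h2 : q ^ e ∣ (u + 1).ascFactorial n := hqe.trans (Nat.factorial_dvd_ascFactorial _ _)
    rw [(ZMod.natCast_eq_zero_iff _ _).2 h2, mul_zero]

lemma th_le (d N : ℕ) (hd : d ≠ 0) : th d N ≤ (N / d : ℝ) * (2 * Real.log d + 3) := by
  set n := N / d with hn
  have hdpos : 0 < d := Nat.pos_of_ne_zero hd
  have hd1 : (1:ℝ) ≤ d := by exact_mod_cast hdpos
  have hnN : (n : ℝ) ≤ N / d := Nat.cast_div_le
  have hlogd : 0 ≤ Real.log d := Real.log_nonneg hd1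
  set P := (Finset.Icc 1 N).filter (fun p => p.Prime ∧ d ∣ p - 1) with hP
  have hsplit : th d N = ∑ p ∈ P.filter (fun p => p ≤ n), Real.log p + ∑ p ∈ P.filter (fun p => ¬ p ≤ n), Real.log p := by
    rw [Finset.sum_filter_add_sum_filter_not]; rfl
  have hlow : ∑ p ∈ P.filter (fun p => p ≤ n), Real.log p ≤ 2 * n := by
    have h1 : ∑ p ∈ P.filter (fun p => p ≤ n), Real.log p ≤ Chebyshev.theta n := by
      unfold Chebyshev.theta
      rw [Nat.floor_natCast]
      apply Finset.sum_le_sum_of_subset_of_nonneg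
      · intro p hp
        simp only [hP, Finset.mem_filter, Finset.mem_Icc, Finset.mem_Ioc] at hp ⊢
        exact ⟨⟨by omega, hp.2⟩, hp.1.2.1⟩
      · intro p hp _
        exact Real.log_natCast_nonneg p
    have h2 := Chebyshev.theta_le_log4_mul_x (x := n) (by positivity)
    have h3 : Real.log 4 ≤ 2 := by
      rw [show (4:ℝ) = 2 ^ 2 by norm_num, Real.log_pow]
      have := Real.log_two_lt_d9
      push_cast
      linarith
    have : (0:ℝ) ≤ n := by positivity
    nlinarith
  have hhigh : ∑ p ∈ P.filter (fun p => ¬ p ≤ n), Real.log p ≤ n * (2 * Real.log d + 1) := by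
    set Q := P.filter (fun p => ¬ p ≤ n) with hQ
    have hQp : ∀ p ∈ Q, p.Prime ∧ d ∣ p - 1 ∧ p ≤ N ∧ n < p := by
      intro p hp
      simp only [hQ, hP, Finset.mem_filter, Finset.mem_Icc] at hp
      exact ⟨hp.1.2.1, hp.1.2.2, hp.1.1.2, by omega⟩
    have hdv1 : ∏ p ∈ Q, p ∣ d ^ n * ∏ k ∈ Finset.Icc 1 n, (d * k + 1) := by
      apply Dvd.dvd.mul_left
      apply Finset.prod_primes_dvd
      · intro p hp; exact (hQp p hp).1.prime
      · intro p hp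
        obtain ⟨h1, ⟨k, hk⟩, h3, h4⟩ := hQp p hp
        have := h1.two_le
        have hpk : p = d * k + 1 := by omega
        rw [hpk]
        apply Finset.dvd_prod_of_mem (fun k => d * k + 1)
        rw [Finset.mem_Icc]
        constructor
        · by_contra h; push Not at h
          have : k = 0 := by omega
          rw [this] at hk; omega
        · rw [hn, Nat.le_div_iff_mul_le hdpos, mul_comm]; omega
    have hcop : Nat.Coprime (∏ p ∈ Q, p) n.factorial := by
      apply Nat.Coprime.prod_left
      intro p hp
      obtain ⟨h1, _, _, h4⟩ := hQp p hp
      exact (Nat.Prime.coprime_iff_not_dvd h1).2 (fun h => by have := (h1.dvd_factorial).1 h; omega)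
    have hdv := Nat.Coprime.mul_dvd_of_dvd_of_dvd hcop hdv1 (fact_dvd d n hd)
    have hle := Nat.le_of_dvd (Nat.pos_of_ne_zero (by
      apply mul_ne_zero (pow_ne_zero _ hd)
      exact Finset.prod_ne_zero_iff.2 fun k _ => by omega)) hdv
    have hle2 : ∏ k ∈ Finset.Icc 1 n, (d * k + 1) ≤ d ^ n * (n + 1).factorial := by
      clear_value n
      clear * - hdpos
      induction n with
      | zero => simp
      | succ n ih =>
        rw [Finset.prod_Icc_succ_top (by omega), pow_succ, Nat.factorial_succ (n + 1)]
        calc _ ≤ (d ^ n * (n + 1).factorial) * (d * (n + 1 + 1)) := by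
              apply Nat.mul_le_mul ih; nlinarith
          _ = _ := by ring
    have hle3 : ∏ p ∈ Q, p ≤ d ^ (2 * n) * (n + 1) := by
      have : (∏ p ∈ Q, p) * n.factorial ≤ (d ^ (2 * n) * (n + 1)) * n.factorial := by
        calc _ ≤ d ^ n * (d ^ n * (n + 1).factorial) := hle.trans (Nat.mul_le_mul_left _ hle2)
          _ = _ := by rw [Nat.factorial_succ]; ring
      exact Nat.le_of_mul_le_mul_right this (Nat.factorial_pos n)
    have hlogsum : ∑ p ∈ Q, Real.log p = Real.log ((∏ p ∈ Q, p : ℕ) : ℝ) := by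
      push_cast
      rw [Real.log_prod]
      intro p hp
      exact_mod_cast (hQp p hp).1.ne_zero
    rw [hlogsum]
    have hpos : 0 < ∏ p ∈ Q, p := Finset.prod_pos fun p hp => (hQp p hp).1.pos
    calc Real.log ((∏ p ∈ Q, p : ℕ) : ℝ) ≤ Real.log ((d ^ (2 * n) * (n + 1) : ℕ) : ℝ) := by
          apply Real.log_le_log (by exact_mod_cast hpos)
          exact_mod_cast hle3
      _ = 2 * n * Real.log d + Real.log (n + 1) := by
          push_cast
          rw [Real.log_mul (by positivity) (by positivity), Real.log_pow]; push_cast; ring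
      _ ≤ _ := by
          have := Real.log_le_sub_one_of_pos (x := (n:ℝ) + 1) (by positivity)
          linarith
  rw [hsplit]
  calc _ ≤ (n:ℝ) * (2 * Real.log d + 3) := by linarith
    _ ≤ _ := mul_le_mul_of_nonneg_right hnN (by linarith)

open ArithmeticFunction in
lemma totient_div (n : ℕ) (hn : 0 < n) :
    (n.totient : ℝ) / n = ∑ d ∈ n.divisors, (moebius d : ℝ) / d := by
  have h := (ArithmeticFunction.sum_eq_iff_sum_mul_moebius_eq (R := ℝ) (f := fun n => (n.totient : ℝ))
    (g := fun n => (n : ℝ))).1 (by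
      intro n _
      exact_mod_cast congrArg (Nat.cast (R := ℝ)) (Nat.sum_totient n)) n hn
  rw [← h, Nat.sum_divisorsAntidiagonal (fun a b => ((moebius a : ℤ) : ℝ) * (b : ℝ)), Finset.sum_div]
  apply Finset.sum_congr rfl
  intro d hd
  have hdn := Nat.dvd_of_mem_divisors hd
  have hd0 : (d : ℝ) ≠ 0 := by
    exact_mod_cast (Nat.pos_of_mem_divisors hd).ne'
  have hn0 : (n : ℝ) ≠ 0 := by exact_mod_cast hn.ne'
  rw [Nat.cast_div hdn hd0]
  field_simp

noncomputable def artCoef (d : ℕ) : ℝ := (ArithmeticFunction.moebius d : ℝ) / d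

noncomputable def wsum (N : ℕ) : ℝ :=
  ∑ p ∈ (Finset.Icc 1 N).filter Nat.Prime, ((p - 1).totient : ℝ) / ((p - 1 : ℕ) : ℝ) * Real.log p

lemma wsum_eq (N : ℕ) : wsum N = ∑' d, artCoef d * th d N := by
  rw [tsum_eq_sum (s := Finset.Icc 1 N)]
  · unfold wsum th
    simp_rw [Finset.mul_sum]
    have h1 : ∀ p ∈ (Finset.Icc 1 N).filter Nat.Prime,
        ((p - 1).totient : ℝ) / ((p - 1 : ℕ) : ℝ) * Real.log p =
        ∑ d ∈ Finset.Icc 1 N, if d ∣ p - 1 then artCoef d * Real.log p else 0 := by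
      intro p hp
      simp only [Finset.mem_filter, Finset.mem_Icc] at hp
      have := hp.2.two_le
      rw [totient_div _ (by omega), Finset.sum_mul, ← Finset.sum_filter]
      apply Finset.sum_congr
      · ext d
        simp only [Nat.mem_divisors, Finset.mem_filter, Finset.mem_Icc]
        constructor
        · rintro ⟨h1, h2⟩
          have := Nat.le_of_dvd (by omega) h1
          have := Nat.pos_of_dvd_of_pos h1 (by omega)
          exact ⟨⟨by omega, by omega⟩, h1⟩
        · rintro ⟨_, h⟩
          exact ⟨h, by omega⟩
      · intros; rfl
    rw [Finset.sum_congr rfl h1, Finset.sum_comm]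
    apply Finset.sum_congr rfl
    intro d _
    rw [← Finset.sum_filter, Finset.filter_filter]
  · intro d hd
    rw [Finset.mem_Icc] at hd
    rcases Nat.eq_zero_or_pos d with h0 | h0
    · subst h0; simp [artCoef]
    · have : th d N = 0 := by
        unfold th
        rw [Finset.filter_eq_empty_iff.2, Finset.sum_empty]
        intro p hp h
        rw [Finset.mem_Icc] at hp
        have := h.1.two_le
        have := Nat.le_of_dvd (by omega) h.2
        omega
      rw [this, mul_zero]

lemma th_nonneg (d N : ℕ) : 0 ≤ th d N := Finset.sum_nonneg fun p _ => Real.log_natCast_nonneg p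

lemma term_bound (N : ℕ) (hN : 0 < N) (d : ℕ) :
    ‖artCoef d * (th d N / N)‖ ≤ 7 * (1 / (d : ℝ) ^ (3 / 2 : ℝ)) := by
  rcases Nat.eq_zero_or_pos d with h0 | h0
  · subst h0; simp [artCoef]
  have hd : (1:ℝ) ≤ d := by exact_mod_cast h0
  have hN' : (0:ℝ) < N := by exact_mod_cast hN
  have h1 : ‖artCoef d‖ ≤ 1 / d := by
    unfold artCoef
    rw [norm_div]
    have : ‖((ArithmeticFunction.moebius d : ℤ) : ℝ)‖ ≤ 1 := by
      rw [Real.norm_eq_abs]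
      exact_mod_cast ArithmeticFunction.abs_moebius_le_one
    rw [Real.norm_of_nonneg (by positivity : (0:ℝ) ≤ d)]
    gcongr
  have h2 : th d N / N ≤ (2 * Real.log d + 3) / d := by
    rw [div_le_iff₀ hN']
    refine (th_le d N h0.ne').trans (le_of_eq ?_)
    ring
  have h3 : Real.log d ≤ 2 * (d : ℝ) ^ (1 / 2 : ℝ) := by
    have := Real.log_le_rpow_div (x := d) (by positivity) (ε := 1 / 2) (by norm_num)
    linarith
  have h4 : (1:ℝ) ≤ (d : ℝ) ^ (1 / 2 : ℝ) := Real.one_le_rpow hd (by norm_num)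
  have h5 : (d : ℝ) ^ (3 / 2 : ℝ) * (d : ℝ) ^ (1 / 2 : ℝ) = d * d := by
    rw [← Real.rpow_add (by positivity)]; norm_num; ring
  rw [norm_mul, Real.norm_of_nonneg (div_nonneg (th_nonneg d N) hN'.le)]
  calc ‖artCoef d‖ * (th d N / N) ≤ 1 / d * ((2 * Real.log d + 3) / d) :=
        mul_le_mul h1 h2 (div_nonneg (th_nonneg d N) hN'.le) (by positivity)
    _ ≤ 1 / d * (7 * (d : ℝ) ^ (1 / 2 : ℝ) / d) := by gcongr; linarith
    _ = 7 * (d : ℝ) ^ (1 / 2 : ℝ) / (d * d) := by ring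
    _ = 7 * (1 / (d : ℝ) ^ (3 / 2 : ℝ)) := by
        rw [← h5]
        have : 0 < (d : ℝ) ^ (1 / 2 : ℝ) := by positivity
        field_simp

lemma term_tendsto (d : ℕ) :
    Tendsto (fun N : ℕ => artCoef d * (th d N / N)) atTop (𝓝 (artCoef d * (d.totient : ℝ)⁻¹)) := by
  rcases Nat.eq_zero_or_pos d with h0 | h0
  · subst h0; simp [artCoef]
  · exact (th_tendsto d h0.ne').const_mul _

lemma bound_summable : Summable (fun d : ℕ => 7 * (1 / (d : ℝ) ^ (3 / 2 : ℝ))) :=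
  (Real.summable_one_div_nat_rpow.2 (by norm_num)).mul_left 7

lemma coef_bound (d : ℕ) : ‖artCoef d * (d.totient : ℝ)⁻¹‖ ≤ 7 * (1 / (d : ℝ) ^ (3 / 2 : ℝ)) := by
  apply le_of_tendsto (term_tendsto d).norm
  filter_upwards [eventually_gt_atTop 0] with N hN using term_bound N hN d

lemma artin_tsum : ∑' d : ℕ, artCoef d * (d.totient : ℝ)⁻¹ = artinConstant := by
  have h := EulerProduct.eulerProduct_tprod (R := ℝ) (f := fun d : ℕ => artCoef d * (d.totient : ℝ)⁻¹)
    (by simp [artCoef]) (by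
      intro m n hmn
      simp only [artCoef]
      rw [ArithmeticFunction.isMultiplicative_moebius.map_mul_of_coprime hmn, Nat.totient_mul hmn]
      push_cast
      rw [mul_inv]
      ring) (bound_summable.of_nonneg_of_le (fun _ => norm_nonneg _) coef_bound) (by simp [artCoef])
  rw [← h]
  unfold artinConstant
  congr 1
  ext p
  have hp := p.2
  have hp1 : (1:ℝ) < (p : ℕ) := by exact_mod_cast hp.one_lt
  rw [tsum_eq_sum (s := Finset.range 2)]
  · rw [Finset.sum_range_succ, Finset.sum_range_one]
    simp only [pow_zero, pow_one, artCoef, ArithmeticFunction.moebius_apply_prime hp, Nat.totient_prime hp]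
    rw [Nat.cast_sub hp.one_lt.le]
    have : ((p : ℕ) : ℝ) - 1 ≠ 0 := by linarith
    simp
    field_simp
    ring
  · intro e he
    have he2 : 1 < e := by simpa using he
    have : ArithmeticFunction.moebius ((p : ℕ) ^ e) = 0 := by
      rw [ArithmeticFunction.moebius_apply_prime_pow hp (by omega), if_neg (by omega)]
    simp [artCoef, this]

lemma wsum_tendsto : Tendsto (fun N : ℕ => wsum N / N) atTop (𝓝 artinConstant) := by
  rw [← artin_tsum]
  have := tendsto_tsum_of_dominated_convergence (𝓕 := atTop) bound_summable term_tendsto (by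
    filter_upwards [eventually_gt_atTop 0] with N hN using term_bound N hN)
  refine this.congr fun N => ?_
  rw [wsum_eq, ← tsum_div_const]
  congr 1; ext d; ring

/-- the error sequence -/
noncomputable def er (n : ℕ) : ℝ := if n.Prime then
  (((n - 1).totient : ℝ) / ((n - 1 : ℕ) : ℝ) - artinConstant) * Real.log n else 0

noncomputable def ww (n : ℕ) : ℝ := ((n : ℝ) - 1) / Real.log n

lemma ww_mono (n : ℕ) (hn : 2 ≤ n) : ww n ≤ ww (n + 1) := by
  unfold ww
  have hn' : (2:ℝ) ≤ n := by exact_mod_cast hn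
  have h1 : 0 < Real.log n := Real.log_pos (by linarith)
  have h2 : 0 < Real.log ((n + 1 : ℕ) : ℝ) := Real.log_pos (by push_cast; linarith)
  rw [div_le_div_iff₀ h1 h2]
  have h3 : Real.log ((n + 1 : ℕ) : ℝ) ≤ Real.log n + 1 / n := by
    have := Real.log_le_sub_one_of_pos (x := ((n + 1 : ℕ) : ℝ) / n) (by positivity)
    rw [Real.log_div (by positivity) (by positivity)] at this
    have e : ((n + 1 : ℕ) : ℝ) / n - 1 = 1 / n := by push_cast; field_simp; ring
    linarith
  have h4 := Real.one_sub_inv_le_log_of_pos (x := (n : ℝ)) (by linarith)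
  have h5 : ((n:ℝ) - 1) * (1 / n) = 1 - (n : ℝ)⁻¹ := by field_simp
  push_cast at *
  nlinarith [mul_le_mul_of_nonneg_left h3 (by linarith : (0:ℝ) ≤ n - 1)]

lemma er_tendsto : Tendsto (fun N : ℕ => (∑ n ∈ Finset.Icc 1 N, er n) / N) atTop (𝓝 0) := by
  have h1 := th_tendsto 1 one_ne_zero
  have := wsum_tendsto.sub (h1.const_mul artinConstant)
  simp only [Nat.totient_one, Nat.cast_one, inv_one, mul_one, sub_self] at this
  refine this.congr fun N => ?_
  unfold wsum th er
  simp only [one_dvd, and_true]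
  rw [← Finset.sum_filter]
  simp_rw [sub_mul]
  rw [Finset.sum_sub_distrib, ← Finset.mul_sum]
  ring

lemma abel_bound (ε : ℝ) (n0 : ℕ) (hn0 : 2 ≤ n0)
    (h : ∀ n, n0 ≤ n → |∑ k ∈ Finset.Icc 1 n, er k| ≤ ε * n) :
    ∃ C, ∀ N, n0 ≤ N → |∑ k ∈ Finset.Icc 1 N, er k * ww k| ≤ 2 * ε * N * ww N + C := by
  have hε : 0 ≤ ε := by
    have h1 := (abs_nonneg _).trans (h n0 le_rfl)
    have : (0:ℝ) < n0 := by exact_mod_cast (by omega : 0 < n0)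
    by_contra hc
    push Not at hc
    nlinarith
  set B : ℕ → ℝ := fun N => (∑ k ∈ Finset.Icc 1 N, er k * ww k) - (∑ k ∈ Finset.Icc 1 N, er k) * ww N with hB
  have hww : ∀ n, 2 ≤ n → 0 ≤ ww n := by
    intro n hn
    have hn' : (2:ℝ) ≤ n := by exact_mod_cast hn
    exact div_nonneg (by linarith) (Real.log_natCast_nonneg n)
  have hind : ∀ N, n0 ≤ N → ww n0 ≤ ww N ∧ |B N| ≤ |B n0| + ε * N * (ww N - ww n0) := by
    intro N hN
    induction N, hN using Nat.le_induction with
    | base => simp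
    | succ N hN ih =>
      obtain ⟨ih1, ih2⟩ := ih
      have hm := ww_mono N (by omega)
      refine ⟨ih1.trans hm, ?_⟩
      have hrec : B (N + 1) = B N - (∑ k ∈ Finset.Icc 1 N, er k) * (ww (N + 1) - ww N) := by
        simp only [hB]
        rw [Finset.sum_Icc_succ_top (by omega), Finset.sum_Icc_succ_top (by omega)]
        ring
      have h3 : |B (N + 1)| ≤ |B N| + ε * N * (ww (N + 1) - ww N) := by
        rw [hrec]
        refine (abs_sub _ _).trans ?_
        rw [abs_mul, abs_of_nonneg (by linarith : 0 ≤ ww (N + 1) - ww N)]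
        gcongr
        exact h N hN
      push_cast
      nlinarith [mul_nonneg hε (by linarith : 0 ≤ ww (N + 1) - ww n0)]
  refine ⟨|B n0|, fun N hN => ?_⟩
  obtain ⟨_, h2⟩ := hind N hN
  have h3 : ∑ k ∈ Finset.Icc 1 N, er k * ww k = B N + (∑ k ∈ Finset.Icc 1 N, er k) * ww N := by
    simp only [hB]; ring
  rw [h3]
  have h4 : |(∑ k ∈ Finset.Icc 1 N, er k) * ww N| ≤ ε * N * ww N := by
    rw [abs_mul, abs_of_nonneg (hww N (by omega))]
    exact mul_le_mul_of_nonneg_right (h N hN) (hww N (by omega))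
  have h5 : 0 ≤ ε * N * ww n0 := by have := hww n0 hn0; positivity
  have := abs_add_le (B N) ((∑ k ∈ Finset.Icc 1 N, er k) * ww N)
  linarith

lemma nww_tendsto : Tendsto (fun N : ℕ => (N : ℝ) * ww N) atTop atTop := by
  refine tendsto_atTop_mono' atTop ?_ (tendsto_natCast_atTop_atTop (R := ℝ))
  filter_upwards [eventually_ge_atTop 2] with N hN
  have hN' : (2:ℝ) ≤ N := by exact_mod_cast hN
  have h1 : 0 < Real.log N := Real.log_pos (by linarith)
  have : 1 ≤ ww N := by
    unfold ww
    rw [one_le_div h1]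
    exact Real.log_le_sub_one_of_pos (by linarith)
  nlinarith

lemma d_tendsto : Tendsto (fun N : ℕ => (∑ k ∈ Finset.Icc 1 N, er k * ww k) / (N * ww N)) atTop (𝓝 0) := by
  rw [Metric.tendsto_atTop']
  intro ε hε
  have h1 := (Metric.tendsto_nhds.1 er_tendsto) (ε / 4) (by positivity)
  obtain ⟨n1, hn1⟩ := eventually_atTop.1 h1
  obtain ⟨C, hC⟩ := abel_bound (ε / 4) (max n1 2) (le_max_right _ _) (by
    intro n hn
    have := hn1 n (le_trans (le_max_left _ _) hn)
    have hn' : (0:ℝ) < n := by exact_mod_cast (by have := le_max_right n1 2; omega : 0 < n)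
    rw [dist_zero_right, norm_div, Real.norm_of_nonneg hn'.le, div_lt_iff₀ hn'] at this
    exact this.le)
  have h2 := nww_tendsto.eventually_gt_atTop (max 0 (4 * C / ε))
  obtain ⟨n2, hn2⟩ := eventually_atTop.1 h2
  refine ⟨max (max n1 2) n2, fun N hN => ?_⟩
  have hb := hC N (by omega)
  have hw := hn2 N (by omega)
  have hw0 := (le_max_left _ _).trans_lt hw
  have hw1 := (le_max_right _ _).trans_lt hw
  rw [div_lt_iff₀ hε] at hw1
  rw [dist_zero_right, norm_div, Real.norm_of_nonneg hw0.le, div_lt_iff₀ hw0, Real.norm_eq_abs]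
  nlinarith

noncomputable def tt (N : ℕ) : ℝ := ∑ p ∈ (Finset.Icc 1 N).filter Nat.Prime, ((p : ℝ) - 1)

lemma tt_lower : ∀ᶠ N : ℕ in atTop, (N * ww N) / 96 ≤ tt N := by
  have h1 := th_tendsto 1 one_ne_zero
  simp only [Nat.totient_one, Nat.cast_one, inv_one] at h1
  filter_upwards [h1.eventually_const_lt (u := 1 / 2) (by norm_num), eventually_ge_atTop 24] with N hN hN24
  have hN' : (24:ℝ) ≤ N := by exact_mod_cast hN24
  have hlog : 0 < Real.log N := Real.log_pos (by linarith)
  rw [lt_div_iff₀ (by linarith)] at hN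
  set m := N / 12 with hm
  have hm1 : (m : ℝ) ≤ N / 12 := by
    have := Nat.cast_div_le (α := ℝ) (m := N) (n := 12)
    exact_mod_cast this
  have hm2 : (N : ℝ) / 24 ≤ m := by
    have : N ≤ 24 * m := by omega
    have : (N : ℝ) ≤ 24 * m := by exact_mod_cast this
    linarith
  have hthm := th_le 1 m one_ne_zero
  simp at hthm
  have hdiff : (N : ℝ) / 4 ≤ th 1 N - th 1 m := by linarith
  have hsub : th 1 N - th 1 m = ∑ p ∈ (Finset.Icc (m + 1) N).filter Nat.Prime, Real.log p := by
    unfold th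
    simp only [one_dvd, and_true]
    rw [sub_eq_iff_eq_add, ← Finset.sum_union]
    · congr 1
      ext p
      simp only [Finset.mem_union, Finset.mem_filter, Finset.mem_Icc]
      constructor
      · rintro ⟨h, hp⟩
        by_cases hpm : p ≤ m
        · right; exact ⟨⟨h.1, hpm⟩, hp⟩
        · left; exact ⟨⟨by omega, h.2⟩, hp⟩
      · rintro (⟨h, hp⟩ | ⟨h, hp⟩)
        · exact ⟨⟨by omega, by omega⟩, hp⟩
        · exact ⟨⟨by omega, by omega⟩, hp⟩
    · rw [Finset.disjoint_left]
      intro p hp hp2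
      simp only [Finset.mem_filter, Finset.mem_Icc] at hp hp2
      omega
  have hT : (m / Real.log N) * (th 1 N - th 1 m) ≤ tt N := by
    rw [hsub, Finset.mul_sum]
    calc _ ≤ ∑ p ∈ (Finset.Icc (m + 1) N).filter Nat.Prime, ((p : ℝ) - 1) := by
          apply Finset.sum_le_sum
          intro p hp
          simp only [Finset.mem_filter, Finset.mem_Icc] at hp
          have hpm : (m : ℝ) + 1 ≤ p := by exact_mod_cast hp.1.1
          have hpN : (p : ℝ) ≤ N := by exact_mod_cast hp.1.2
          have hp0 : (0 : ℝ) < p := by exact_mod_cast hp.2.pos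
          have hl : Real.log p ≤ Real.log N := Real.log_le_log hp0 hpN
          rw [div_mul_eq_mul_div, div_le_iff₀ hlog]
          apply mul_le_mul (by linarith) hl (Real.log_natCast_nonneg p) (by
            have : (0:ℝ) ≤ m := by positivity
            linarith)
      _ ≤ tt N := by
          apply Finset.sum_le_sum_of_subset_of_nonneg
          · intro p hp
            simp only [Finset.mem_filter, Finset.mem_Icc] at hp ⊢
            exact ⟨⟨by omega, hp.1.2⟩, hp.2⟩
          · intro p hp _
            simp only [Finset.mem_filter, Finset.mem_Icc] at hp
            have : (1 : ℝ) ≤ p := by exact_mod_cast hp.1.1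
            linarith
  refine le_trans ?_ hT
  unfold ww
  rw [div_mul_eq_mul_div, mul_div_assoc', div_div, div_le_div_iff₀ (by positivity) hlog]
  have : (N : ℝ) * (N - 1) ≤ (m * (th 1 N - th 1 m)) * 96 := by
    have : (N : ℝ) / 24 * (N / 4) ≤ m * (th 1 N - th 1 m) :=
      mul_le_mul hm2 hdiff (by positivity) (by positivity)
    nlinarith
  nlinarith

noncomputable def ss (N : ℕ) : ℝ := ∑ p ∈ (Finset.Icc 1 N).filter Nat.Prime, ((p - 1).totient : ℝ)

lemma ss_eq (N : ℕ) : ss N - artinConstant * tt N = ∑ k ∈ Finset.Icc 1 N, er k * ww k := by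
  unfold ss tt er ww
  simp_rw [ite_mul, zero_mul]
  rw [← Finset.sum_filter, Finset.mul_sum, ← Finset.sum_sub_distrib]
  apply Finset.sum_congr rfl
  intro p hp
  simp only [Finset.mem_filter, Finset.mem_Icc] at hp
  have h2 : (2:ℝ) ≤ p := by exact_mod_cast hp.2.two_le
  have hl : 0 < Real.log p := Real.log_pos (by linarith)
  have h3 : (p : ℝ) - 1 ≠ 0 := by linarith
  rw [Nat.cast_sub hp.1.1]
  push_cast
  field_simp

lemma ratio_tendsto : Tendsto (fun N : ℕ => ss N / tt N) atTop (𝓝 artinConstant) := by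
  rw [← tendsto_sub_nhds_zero_iff]
  have h := (d_tendsto.abs.const_mul 96)
  rw [abs_zero, mul_zero] at h
  refine squeeze_zero_norm' ?_ h
  filter_upwards [tt_lower, nww_tendsto.eventually_gt_atTop 0] with N h1 h2
  have h3 : 0 < tt N := by linarith
  have : ss N / tt N - artinConstant = (∑ k ∈ Finset.Icc 1 N, er k * ww k) / tt N := by
    rw [← ss_eq]; field_simp
  rw [this, Real.norm_eq_abs, abs_div, abs_div, abs_of_pos h3, abs_of_pos h2, mul_div_assoc',
    div_le_div_iff₀ h3 h2]
  nlinarith [abs_nonneg (∑ k ∈ Finset.Icc 1 N, er k * ww k)]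

lemma sum_nth (F : ℕ → ℝ) (N : ℕ) : ∑ i ∈ Finset.range N, F (Nat.nth Nat.Prime i) =
    ∑ p ∈ (Finset.Icc 1 (Nat.nth Nat.Prime N - 1)).filter Nat.Prime, F p := by
  have h0 : (Finset.Icc 1 (Nat.nth Nat.Prime N - 1)).filter Nat.Prime =
      (Finset.range (Nat.nth Nat.Prime N)).filter Nat.Prime := by
    ext p
    simp only [Finset.mem_filter, Finset.mem_Icc, Finset.mem_range]
    constructor
    · rintro ⟨h, hp⟩
      exact ⟨by omega, hp⟩
    · rintro ⟨h, hp⟩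
      have := hp.pos
      exact ⟨by omega, hp⟩
  rw [h0]
  clear h0
  induction N with
  | zero =>
    rw [Finset.sum_range_zero, Finset.filter_eq_empty_iff.2, Finset.sum_empty]
    intro p hp hpp
    rw [Nat.nth_prime_zero_eq_two, Finset.mem_range] at hp
    have := hpp.two_le
    omega
  | succ N ih =>
    rw [Finset.sum_range_succ, ih, Nat.filter_range_nth_eq_insert_of_infinite Nat.infinite_setOfPred_prime,
      Finset.sum_insert (by simp)]
    ring

end ArtinAux

/-- The ratio `(∑_{i=1}^N φ(p_i - 1)) / (∑_{i=1}^N (p_i - 1))` over the first `N`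
primes tends to Artin's constant. -/
theorem artin_ratio_formula :
    Tendsto (fun N : ℕ =>
        (∑ i ∈ Finset.range N, ((Nat.nth Nat.Prime i - 1).totient : ℝ)) /
        (∑ i ∈ Finset.range N, ((Nat.nth Nat.Prime i : ℝ) - 1)))
      atTop (nhds artinConstant) := by
  have h1 : Tendsto (fun N => Nat.nth Nat.Prime N - 1) atTop atTop :=
    (tendsto_sub_atTop_nat 1).comp (Nat.nth_strictMono Nat.infinite_setOfPred_prime).tendsto_atTop
  refine (ratio_tendsto.comp h1).congr fun N => ?_
  simp only [Function.comp, ss, tt]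
  rw [sum_nth (fun p => ((p - 1).totient : ℝ)), sum_nth (fun p => (p : ℝ) - 1)]
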